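/- Let G, n, m and k (0 ≤ k ≤ n) be as in the context. Let w be a word over Σ₂ = {0,1} such that S = φ(w) is a common supersequence of {X_i^j : i ∈ [1:n], j ∈ [0:36n²]} and |S| ≤ 168n² + 37n − 3 + k, and write w = w' w'' where w' is the shortest prefix of w containing exactly 6n² + 3n occurrences of 0. Let e_l = v_i v_j with i < j be an edge of G. If w' contains no occurrence of the letter 1 whose number of preceding 0's (within w') lies in the interval [6n(i−1), 6n(i−1) + 3n], and no occurrence of 1 whose number of preceding 0's lies in [6n(j−1), 6n(j−1) + 3n], then T_l is not a subsequence of S. -/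

import Mathlib

/-- The morphism φ : Σ₂* → Σ₃* with φ(0) = 0202 and φ(1) = 1. -/
def phi : List (Fin 2) → List (Fin 3)
  | [] => []
  | a :: w => (if a = 0 then [0, 2, 0, 2] else [1]) ++ phi w

/-- `(0202)^k` over Σ₃. -/
def pow0202 (k : ℕ) : List (Fin 3) := (List.replicate k [(0 : Fin 3), 2, 0, 2]).flatten

/-- `A_i = (0202)^{6n(i-1)+3n} 1 (0202)^{6n(n+1-i)}`. -/
def Aword (n i : ℕ) : List (Fin 3) :=
  pow0202 (6 * n * (i - 1) + 3 * n) ++ [1] ++ pow0202 (6 * n * (n + 1 - i))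

/-- `B_j = (0202)^j 1 (0202)^{36n²-j}`. -/
def Bword (n j : ℕ) : List (Fin 3) := pow0202 j ++ [1] ++ pow0202 (36 * n ^ 2 - j)

/-- `X_i^j = A_i B_j`. -/
def Xword (n i j : ℕ) : List (Fin 3) := Aword n i ++ Bword n j

/-- `T_l` for the edge `e_l = v_i v_j`, `i < j`. -/
def Tword (n i j : ℕ) : List (Fin 3) :=
  pow0202 (6 * n * (i - 1)) ++ [1] ++ pow0202 (6 * n * (j - i - 1) + 3 * n) ++ [1]
    ++ pow0202 (6 * n * (n + 2 - j)) ++ pow0202 (36 * n ^ 2 - 1)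

/-!
Pulling `S = φ(w)` back to `w` turns the subsequence conditions into conditions on the ranks of the
letters `1`, the rank of an occurrence being the number of `0`s before it. If `T_l` embeds into
`S`, its first `1` has rank at least `6n(i-1)`; the forbidden interval pushes it beyond
`6n(i-1) + 3n`, hence the second `1` beyond `6n(j-1)`, and the second forbidden interval pushes
that one beyond `6n(j-1) + 3n`. Thus `w` has at least `42n² + 9n` zeros, say `42n² + 9n + s`. The
words `X_v^0, …, X_v^{36n²}` then put a `1` into each of `36n² + 1` consecutive windows of
`6n + s + 1` ranks. As an occurrence serves at most `6n + s + 1` windows, `w` has more than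
`36n² / (6n + s + 1) ≥ 6n - (s + 1)` ones, so `|S| = 4 |w|₀ + |w|₁` is at least `168n² + 42n`.
-/

section OccursAtRank

variable {α : Type*} [DecidableEq α] {a b : α} {w : List α}

/-- The letter `b` has an occurrence in `w` preceded by exactly `r` letters `a`; this encodes the
paper's positions of `1`s measured by the number of preceding `0`s. -/
def OccursAtRank (a b : α) (w : List α) (r : ℕ) : Prop :=
  ∃ p q, w = p ++ b :: q ∧ p.count a = r

theorem append_singleton_prefix_of_count_lt {p q u : List α} (hw : w = p ++ b :: q)
    (hu : u <+: w) (hlt : p.count a < u.count a) : p ++ [b] <+: u := by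
  have hpb : p ++ [b] <+: w := ⟨q, by simp [hw]⟩
  rcases List.prefix_or_prefix_of_prefix hpb hu with h | h
  · exact h
  · rcases List.prefix_concat_iff.1 h with rfl | hup
    · exact List.prefix_rfl
    · exact absurd (hup.sublist.count_le a) hlt.not_ge

theorem OccursAtRank.of_prefix {u : List α} {r : ℕ} (h : OccursAtRank a b w r) (hu : u <+: w)
    (hr : r < u.count a) : OccursAtRank a b u r := by
  obtain ⟨p, q, hw, rfl⟩ := h
  obtain ⟨s, hs⟩ := append_singleton_prefix_of_count_lt hw hu hr
  exact ⟨p, s, by simp [← hs], rfl⟩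

theorem card_le_count_of_occursAtRank {s : Finset ℕ} (h : ∀ r ∈ s, OccursAtRank a b w r) :
    s.card ≤ w.count b := by
  choose! p q hw hr using h
  have hmono : StrictMonoOn (fun r ↦ (p r).count b) s := fun r hrs t hts hrt ↦ by
    have hpre : p r ++ [b] <+: p t :=
      append_singleton_prefix_of_count_lt (a := a) (hw r hrs) ⟨_, (hw t hts).symm⟩
        (by rwa [hr r hrs, hr t hts])
    simpa [Nat.succ_le_iff] using hpre.sublist.count_le b
  have hmaps : ∀ r ∈ s, (p r).count b ∈ Finset.range (w.count b) := fun r hrs ↦ by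
    rw [Finset.mem_range, congrArg (List.count b) (hw r hrs), List.count_append,
      List.count_cons_self]
    omega
  simpa using Finset.card_le_card_of_injOn _ hmaps hmono.injOn

theorem lt_mul_count_of_forall_window {c d N : ℕ}
    (hwin : ∀ j ≤ N, ∃ r, OccursAtRank a b w r ∧ c + j ≤ r ∧ r < c + j + d) :
    N < d * w.count b := by
  choose! f hocc hlower hupper using hwin
  have hfiber (r : ℕ) : {j ∈ Finset.range (N + 1) | f j = r}.card ≤ d := by
    have hsub : {j ∈ Finset.range (N + 1) | f j = r} ⊆ Finset.Ico (r + 1 - c - d) (r + 1 - c) := by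
      intro j hj
      obtain ⟨hjN, rfl⟩ := Finset.mem_filter.1 hj
      have hjN : j ≤ N := Finset.mem_range_succ_iff.1 hjN
      have := hlower j hjN
      have := hupper j hjN
      exact Finset.mem_Ico.2 (by omega)
    refine (Finset.card_le_card hsub).trans ?_
    rw [Nat.card_Ico]
    omega
  have himage : ∀ r ∈ (Finset.range (N + 1)).image f, OccursAtRank a b w r :=
    Finset.forall_mem_image.2 fun j hj ↦ hocc j (Finset.mem_range_succ_iff.1 hj)
  calc
    N + 1 = (Finset.range (N + 1)).card := (Finset.card_range _).symm
    _ ≤ d * ((Finset.range (N + 1)).image f).card :=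
      Finset.card_le_mul_card_image _ d fun r _ ↦ hfiber r
    _ ≤ d * w.count b := Nat.mul_le_mul_left d (card_le_count_of_occursAtRank himage)

end OccursAtRank

theorem exists_eq_append_cons_of_append_cons_sublist {α : Type*} {u v w : List α} {a : α}
    (h : (u ++ a :: v).Sublist w) :
    ∃ p q, w = p ++ a :: q ∧ u.Sublist p ∧ v.Sublist q := by
  obtain ⟨r, s, rfl, hur, hs⟩ := List.append_sublist_iff.1 h
  obtain ⟨s₁, s₂, rfl, ha, hvs⟩ := List.cons_sublist_iff.1 hs
  obtain ⟨x, y, rfl⟩ := List.append_of_mem ha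
  exact ⟨r ++ x, y ++ s₂, by simp, hur.trans (List.sublist_append_left _ _),
    hvs.trans (List.sublist_append_right _ _)⟩

theorem phi_append (u v : List (Fin 2)) : phi (u ++ v) = phi u ++ phi v := by
  induction u with
  | nil => rfl
  | cons a u ih => simp [phi, ih]

theorem phi_cons_zero (u : List (Fin 2)) : phi (0 :: u) = 0 :: 2 :: 0 :: 2 :: phi u := rfl

theorem phi_cons_one (u : List (Fin 2)) : phi (1 :: u) = 1 :: phi u := rfl

theorem phi_replicate_zero (k : ℕ) : phi (List.replicate k 0) = pow0202 k := by
  induction k with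
  | zero => rfl
  | succ k ih => simp [List.replicate_succ, phi, pow0202, ih]

theorem pow0202_add (k l : ℕ) : pow0202 (k + l) = pow0202 k ++ pow0202 l := by
  simp only [pow0202, List.replicate_add, List.flatten_append]

theorem length_phi (w : List (Fin 2)) : (phi w).length = 4 * w.count 0 + w.count 1 := by
  induction w with
  | nil => rfl
  | cons a w ih => fin_cases a <;> simp [phi, ih] <;> ring

theorem sublist_of_phi_sublist_phi :
    ∀ {u w : List (Fin 2)}, (phi u).Sublist (phi w) → u.Sublist w
  | [], w, _ => List.nil_sublist w
  | 0 :: _, [], h => nomatch h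
  | 1 :: _, [], h => nomatch h
  | 0 :: u, 0 :: w, h => by
    simp only [phi_cons_zero, List.cons_sublist_cons] at h
    exact (sublist_of_phi_sublist_phi h).cons_cons 0
  | 0 :: u, 1 :: w, h =>
    have h : (phi (0 :: u)).Sublist (phi w) := h.of_cons_of_ne (by decide)
    (sublist_of_phi_sublist_phi h).cons 1
  | 1 :: u, 0 :: w, h => by
    have h : (phi (1 :: u)).Sublist (phi w) := by
      iterate 4 replace h := List.Sublist.of_cons_of_ne (by decide) h
      exact h
    exact (sublist_of_phi_sublist_phi h).cons 0
  | 1 :: u, 1 :: w, h => by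
    simp only [phi_cons_one, List.cons_sublist_cons] at h
    exact (sublist_of_phi_sublist_phi h).cons_cons 1

/-- The word `0^x 1 0^y 1 0^z`; all the words `X_i^j` and `T_l` are images of such words
under `φ`. -/
def twoOneWord (x y z : ℕ) : List (Fin 2) :=
  List.replicate x 0 ++ 1 :: (List.replicate y 0 ++ 1 :: List.replicate z 0)

theorem phi_twoOneWord (x y z : ℕ) :
    phi (twoOneWord x y z) = pow0202 x ++ 1 :: (pow0202 y ++ 1 :: pow0202 z) := by
  simp only [twoOneWord, phi_append, phi_cons_one, phi_replicate_zero]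

theorem exists_occursAtRank_of_phi_twoOneWord_sublist {x y z : ℕ} {w : List (Fin 2)}
    (h : (phi (twoOneWord x y z)).Sublist (phi w)) :
    ∃ r s, OccursAtRank 0 1 w r ∧ OccursAtRank 0 1 w s ∧
      x ≤ r ∧ r + y ≤ s ∧ s + z ≤ w.count 0 := by
  obtain ⟨p, t, hpt, hxp, ht⟩ :=
    exists_eq_append_cons_of_append_cons_sublist (sublist_of_phi_sublist_phi h)
  obtain ⟨u, q, rfl, hyu, hzq⟩ := exists_eq_append_cons_of_append_cons_sublist ht
  have hxp : x ≤ p.count 0 := by simpa using hxp.count_le 0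
  have hyu : y ≤ u.count 0 := by simpa using hyu.count_le 0
  have hzq : z ≤ q.count 0 := by simpa using hzq.count_le 0
  refine ⟨p.count 0, p.count 0 + u.count 0, ⟨p, _, hpt, rfl⟩,
    ⟨p ++ 1 :: u, q, by simp [hpt], by simp⟩, hxp, by omega, ?_⟩
  have hcount : w.count 0 = p.count 0 + (u.count 0 + q.count 0) := by simp [hpt]
  omega

theorem Xword_eq_phi (n i j : ℕ) :
    Xword n i j = phi (twoOneWord (6 * n * (i - 1) + 3 * n) (6 * n * (n + 1 - i) + j)
      (36 * n ^ 2 - j)) := by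
  simp [phi_twoOneWord, Xword, Aword, Bword, pow0202_add]

theorem Tword_eq_phi (n i j : ℕ) :
    Tword n i j = phi (twoOneWord (6 * n * (i - 1)) (6 * n * (j - i - 1) + 3 * n)
      (6 * n * (n + 2 - j) + (36 * n ^ 2 - 1))) := by
  simp [phi_twoOneWord, Tword, pow0202_add]

theorem exists_occursAtRank_of_Xword_sublist {n i j : ℕ} {w : List (Fin 2)} (hi : 1 ≤ i)
    (hin : i ≤ n) (h : (Xword n i j).Sublist (phi w)) :
    ∃ r, OccursAtRank 0 1 w r ∧ 6 * n ^ 2 + 3 * n + j ≤ r ∧ r + (36 * n ^ 2 - j) ≤ w.count 0 := by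
  rw [Xword_eq_phi] at h
  obtain ⟨r, s, -, hs, hr, hrs, hsw⟩ := exists_occursAtRank_of_phi_twoOneWord_sublist h
  have hsum : 6 * n * (i - 1) + 6 * n * (n + 1 - i) = 6 * n ^ 2 := by
    rw [← mul_add, sq, ← mul_assoc]
    congr 1
    omega
  exact ⟨s, hs, by omega, hsw⟩

theorem lt_mul_count_one_of_forall_Xword_sublist {n i d : ℕ} {w : List (Fin 2)} (hi : 1 ≤ i)
    (hin : i ≤ n) (hX : ∀ j ≤ 36 * n ^ 2, (Xword n i j).Sublist (phi w))
    (hd : w.count 0 < 42 * n ^ 2 + 3 * n + d) : 36 * n ^ 2 < d * w.count 1 := by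
  refine lt_mul_count_of_forall_window (a := 0) (c := 6 * n ^ 2 + 3 * n) fun j hj ↦ ?_
  obtain ⟨r, hr, hlower, hupper⟩ := exists_occursAtRank_of_Xword_sublist hi hin (hX j hj)
  exact ⟨r, hr, hlower, by omega⟩

theorem le_count_zero_of_Tword_sublist {n i j : ℕ} {w : List (Fin 2)} (hi : 1 ≤ i) (hij : i < j)
    (hj : j ≤ n)
    (hgap : ∀ r < 6 * n ^ 2 + 3 * n, OccursAtRank 0 1 w r →
      r ∉ Set.Icc (6 * n * (i - 1)) (6 * n * (i - 1) + 3 * n) ∧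
      r ∉ Set.Icc (6 * n * (j - 1)) (6 * n * (j - 1) + 3 * n))
    (hT : (Tword n i j).Sublist (phi w)) : 42 * n ^ 2 + 9 * n ≤ w.count 0 := by
  rw [Tword_eq_phi] at hT
  obtain ⟨r, s, hr, hs, hir, hrs, hsw⟩ := exists_occursAtRank_of_phi_twoOneWord_sublist hT
  have hmid : 6 * n * (i - 1) + 6 * n * (j - i - 1) + 6 * n = 6 * n * (j - 1) := by
    rw [← mul_add, ← mul_add_one]
    congr 1
    omega
  have htail : 6 * n * (j - 1) + 6 * n * (n + 2 - j) = 6 * n ^ 2 + 6 * n := by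
    rw [← mul_add, show j - 1 + (n + 2 - j) = n + 1 by omega]
    ring
  have hjn : 6 * n * (j - 1) < 6 * n ^ 2 := by
    rw [sq, ← mul_assoc]
    exact Nat.mul_lt_mul_of_pos_left (by omega) (by omega)
  have hr_or : 6 * n ^ 2 + 3 * n ≤ r ∨ 6 * n * (i - 1) + 3 * n < r := by
    by_contra! h
    exact (hgap r h.1 hr).1 ⟨hir, h.2⟩
  have hjs : 6 * n * (j - 1) ≤ s := by omega
  have hjs' : 6 * n * (j - 1) + 3 * n < s := by
    by_contra! h
    exact (hgap s (by omega) hs).2 ⟨hjs, h⟩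
  omega

theorem stmt_16_general {n v i j : ℕ} {w : List (Fin 2)} (hv : 1 ≤ v) (hvn : v ≤ n)
    (hi : 1 ≤ i) (hij : i < j) (hj : j ≤ n)
    (hX : ∀ j' ≤ 36 * n ^ 2, (Xword n v j').Sublist (phi w))
    (hlen : (phi w).length < 168 * n ^ 2 + 42 * n)
    (hgap : ∀ r < 6 * n ^ 2 + 3 * n, OccursAtRank 0 1 w r →
      r ∉ Set.Icc (6 * n * (i - 1)) (6 * n * (i - 1) + 3 * n) ∧
      r ∉ Set.Icc (6 * n * (j - 1)) (6 * n * (j - 1) + 3 * n)) :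
    ¬ (Tword n i j).Sublist (phi w) := by
  intro hT
  obtain ⟨s, hzeros⟩ :=
    Nat.exists_eq_add_of_le (le_count_zero_of_Tword_sublist hi hij hj hgap hT)
  have hones : 36 * n ^ 2 < (6 * n + s + 1) * w.count 1 :=
    lt_mul_count_one_of_forall_Xword_sublist hv hvn hX (by omega)
  have hfew : w.count 1 ≤ 6 * n - (s + 1) := by
    rw [length_phi] at hlen
    omega
  refine hones.not_ge ?_
  calc
    (6 * n + s + 1) * w.count 1 ≤ (6 * n + (s + 1)) * (6 * n - (s + 1)) :=
      Nat.mul_le_mul_left _ hfew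
    _ = (6 * n) ^ 2 - (s + 1) ^ 2 := (Nat.sq_sub_sq _ _).symm
    _ ≤ (6 * n) ^ 2 := Nat.sub_le _ _
    _ = 36 * n ^ 2 := by ring

theorem stmt_16 (n k : ℕ) (hn : 1 ≤ n) (hk : k ≤ n)
    (i j : ℕ) (hi : 1 ≤ i) (hij : i < j) (hj : j ≤ n)
    (w w' w'' : List (Fin 2)) (hw : w = w' ++ w'')
    (hcount : w'.count 0 = 6 * n ^ 2 + 3 * n)
    (hshort : ∀ p : List (Fin 2), p <+: w → p.count 0 = 6 * n ^ 2 + 3 * n →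
      w'.length ≤ p.length)
    (hsupX : ∀ i' j', 1 ≤ i' → i' ≤ n → j' ≤ 36 * n ^ 2 → (Xword n i' j').Sublist (phi w))
    (hlen : (phi w).length ≤ 168 * n ^ 2 + 37 * n - 3 + k)
    (hno : ∀ p q : List (Fin 2), w' = p ++ [1] ++ q →
      ¬(6 * n * (i - 1) ≤ p.count 0 ∧ p.count 0 ≤ 6 * n * (i - 1) + 3 * n) ∧
      ¬(6 * n * (j - 1) ≤ p.count 0 ∧ p.count 0 ≤ 6 * n * (j - 1) + 3 * n)) :
    ¬ (Tword n i j).Sublist (phi w) := by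
  have hgap (r : ℕ) (hr : r < 6 * n ^ 2 + 3 * n) (hocc : OccursAtRank 0 1 w r) :
      r ∉ Set.Icc (6 * n * (i - 1)) (6 * n * (i - 1) + 3 * n) ∧
      r ∉ Set.Icc (6 * n * (j - 1)) (6 * n * (j - 1) + 3 * n) := by
    obtain ⟨p, q, hpq, rfl⟩ := hocc.of_prefix ⟨w'', hw.symm⟩ (hcount ▸ hr)
    exact hno p q (by simpa using hpq)
  exact stmt_16_general le_rfl hn hi hij hj (fun j' ↦ hsupX 1 j' le_rfl hn) (by omega) hgap
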